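/- arXiv:1908.10839 — 2 statements merged into one kernel-verified Lean document; each statement's English description precedes it below -/
import Mathlib

section
/- Let φ_1,…,φ_λ and γ_1,…,γ_t be elements of F_{q^m} such that the λt products φ_ℓ·γ_r are linearly independent over F_q, and let E be the F_q-subspace of F_{q^m} spanned by γ_1,…,γ_t. Let H be an (n−k)×n matrix over F_{q^m} whose entries are h_{i,j} = Σ_{ℓ=1}^{λ} h_{i,j,ℓ} φ_ℓ with coefficients h_{i,j,ℓ} ∈ F_q, and suppose the λ(n−k) × n matrix H_ext over F_q obtained by vertically stacking the λ coefficient matrices (h_{i,j,ℓ})_{i,j} (ℓ = 1,…,λ) has rank n. Then the syndrome map e ↦ e·H^T is injective on the set of vectors e ∈ F_{q^m}^n all of whose entries lie in E; in particular, a vector with all entries in E is uniquely determined by its syndrome. -/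
open Matrix

/-- If the `λt` products `φ_ℓ · γ_r` are linearly independent over `F_q`,
`E` is the span of `γ_1, …, γ_t`, the parity-check matrix `H` has entries
`h_{i,j} = ∑_ℓ h_{i,j,ℓ} φ_ℓ` with `h_{i,j,ℓ} ∈ F_q`, and the stacked coefficient
matrix `H_ext` over `F_q` has rank `n`, then the syndrome map `e ↦ e·Hᵀ` is injective
on vectors all of whose entries lie in `E`. -/
theorem error_vector_unique_from_syndrome
    (q m lam t n k : ℕ) (Fq Fqm : Type*) [Field Fq] [Fintype Fq]
    (hq : Fintype.card Fq = q) [Field Fqm] [Algebra Fq Fqm]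
    (hm : Module.finrank Fq Fqm = m)
    (φ : Fin lam → Fqm) (γ : Fin t → Fqm)
    (hind : LinearIndependent Fq (fun p : Fin lam × Fin t => φ p.1 * γ p.2))
    (H : Matrix (Fin (n - k)) (Fin n) Fqm)
    (hcoef : Fin (n - k) → Fin n → Fin lam → Fq)
    (hH : ∀ i j, H i j = ∑ ℓ : Fin lam, hcoef i j ℓ • φ ℓ)
    (Hext : Matrix (Fin lam × Fin (n - k)) (Fin n) Fq)
    (hHext : ∀ ℓ i j, Hext (ℓ, i) j = hcoef i j ℓ)
    (hrank : Hext.rank = n)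
    (e e' : Fin n → Fqm)
    (he : ∀ j, e j ∈ Submodule.span Fq (Set.range γ))
    (he' : ∀ j, e' j ∈ Submodule.span Fq (Set.range γ))
    (hs : Matrix.vecMul e Hᵀ = Matrix.vecMul e' Hᵀ) :
    e = e' := by
  have hinj : Function.Injective Hext.mulVec := by
    have h1 := LinearMap.finrank_range_add_finrank_ker Hext.mulVecLin
    have h2 : Module.finrank Fq (LinearMap.range Hext.mulVecLin) = n := hrank
    rw [h2, Module.finrank_fin_fun] at h1
    have h3 : Module.finrank Fq (LinearMap.ker Hext.mulVecLin) = 0 := by omega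
    exact LinearMap.ker_eq_bot.1 (Submodule.finrank_eq_zero.1 h3)
  have hd : ∀ j, ∃ c : Fin t → Fq, ∑ r, c r • γ r = e j - e' j := fun j =>
    (Submodule.mem_span_range_iff_exists_fun Fq).1 (Submodule.sub_mem _ (he j) (he' j))
  choose c hc using hd
  have hz : ∀ i, ∑ j, (e j - e' j) * H i j = 0 := by
    intro i
    have := congrFun hs i
    simp only [Matrix.vecMul, dotProduct, Matrix.transpose_apply] at this
    simp only [sub_mul, Finset.sum_sub_distrib, this, sub_self]
  have hcoefz : ∀ i l r, ∑ j, hcoef i j l * c j r = 0 := by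
    intro i l r
    refine Fintype.linearIndependent_iff.1 hind
      (fun p => ∑ j, hcoef i j p.1 * c j p.2) ?_ (l, r)
    rw [← hz i]
    simp only [Finset.sum_smul]
    rw [Finset.sum_comm]
    refine Finset.sum_congr rfl fun j _ => ?_
    rw [← hc j, hH i j, mul_comm, Finset.sum_mul_sum, Fintype.sum_prod_type]
    refine Finset.sum_congr rfl fun l _ => Finset.sum_congr rfl fun r _ => ?_
    rw [smul_mul_smul_comm]
  have hc0 : ∀ r, (fun j => c j r) = 0 := by
    intro r
    apply hinj
    rw [Matrix.mulVec_zero]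
    funext ⟨l, i⟩
    simpa [Matrix.mulVec, dotProduct, hHext] using hcoefz i l r
  funext j
  rw [← sub_eq_zero, ← hc j]
  refine Finset.sum_eq_zero fun r _ => ?_
  have : c j r = 0 := congrFun (hc0 r) j
  rw [this, zero_smul]
end

section
/- Let φ_1,…,φ_λ and γ_1,…,γ_t be elements of F_{q^m} such that the λt products φ_ℓ·γ_r are linearly independent over F_q, and let E be the F_q-subspace of F_{q^m} spanned by γ_1,…,γ_t. Let H be an (n−k)×n matrix over F_{q^m} whose entries are h_{i,j} = Σ_{ℓ=1}^{λ} h_{i,j,ℓ} φ_ℓ with coefficients h_{i,j,ℓ} ∈ F_q, and suppose the λ(n−k) × n matrix H_ext over F_q obtained by vertically stacking the λ coefficient matrices has rank n. Let C = {c ∈ F_{q^m}^n : c·H^T = 0} and let IC be the u-interleaved code {(c^(1),…,c^(u)) ∈ F_{q^m}^{un} : c^(w) ∈ C for all w}. If y ∈ F_{q^m}^{un} and c, c′ ∈ IC are such that every entry of y − c and every entry of y − c′ lies in E, then c = c′; i.e., the transmitted interleaved codeword is uniquely determined by the received word once the error support E is known. -/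
open Matrix

/-- With the LRPC setup of Statement 5 (products `φ_ℓ γ_r` linearly
independent over `F_q`, `E = ⟨γ_1, …, γ_t⟩`, `H` with entries
`h_{i,j} = ∑_ℓ h_{i,j,ℓ} φ_ℓ`, and `H_ext` of rank `n`), let `C` be the code with
parity-check matrix `H` and `IC` its `u`-interleaved code. If `y` is a received word
and `c, c'` are interleaved codewords such that all entries of `y − c` and of
`y − c'` lie in `E`, then `c = c'`: the interleaved codeword is uniquely determined
once the error support is known. -/
theorem interleaved_codeword_unique_from_support
    (q m lam t n k u : ℕ) (Fq Fqm : Type*) [Field Fq] [Fintype Fq]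
    (hq : Fintype.card Fq = q) [Field Fqm] [Algebra Fq Fqm]
    (hm : Module.finrank Fq Fqm = m)
    (φ : Fin lam → Fqm) (γ : Fin t → Fqm)
    (hind : LinearIndependent Fq (fun p : Fin lam × Fin t => φ p.1 * γ p.2))
    (H : Matrix (Fin (n - k)) (Fin n) Fqm)
    (hcoef : Fin (n - k) → Fin n → Fin lam → Fq)
    (hH : ∀ i j, H i j = ∑ ℓ : Fin lam, hcoef i j ℓ • φ ℓ)
    (Hext : Matrix (Fin lam × Fin (n - k)) (Fin n) Fq)
    (hHext : ∀ ℓ i j, Hext (ℓ, i) j = hcoef i j ℓ)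
    (hrank : Hext.rank = n)
    (y c c' : Fin u → Fin n → Fqm)
    (hc : ∀ w, Matrix.vecMul (c w) Hᵀ = 0)
    (hc' : ∀ w, Matrix.vecMul (c' w) Hᵀ = 0)
    (herr : ∀ w j, y w j - c w j ∈ Submodule.span Fq (Set.range γ))
    (herr' : ∀ w j, y w j - c' w j ∈ Submodule.span Fq (Set.range γ)) :
    c = c' := by
  have hinj : ∀ v : Fin n → Fq, Hext *ᵥ v = 0 → v = 0 := by
    intro v hv
    have h1 := LinearMap.finrank_range_add_finrank_ker Hext.mulVecLin
    have h2 : Module.finrank Fq (LinearMap.range Hext.mulVecLin) = n := hrank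
    rw [h2, Module.finrank_fin_fun] at h1
    have h3 : Module.finrank Fq (LinearMap.ker Hext.mulVecLin) = 0 := by omega
    have h4 := Submodule.finrank_eq_zero.mp h3
    have h5 : v ∈ LinearMap.ker Hext.mulVecLin := by
      rw [LinearMap.mem_ker]
      exact hv
    rw [h4] at h5
    exact (Submodule.mem_bot Fq).mp h5
  funext w
  have hd : ∀ j, ∃ a : Fin t → Fq, ∑ r, a r • γ r = c w j - c' w j := by
    intro j
    have h := Submodule.sub_mem _ (herr' w j) (herr w j)
    rw [sub_sub_sub_cancel_left] at h
    exact (Submodule.mem_span_range_iff_exists_fun Fq).mp h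
  choose a ha using hd
  have hsum : ∀ i, ∑ j, (c w j - c' w j) * H i j = 0 := by
    intro i
    have h1 := congrFun (hc w) i
    have h2 := congrFun (hc' w) i
    simp only [Matrix.vecMul, dotProduct, Matrix.transpose_apply, Pi.zero_apply] at h1 h2
    simp only [sub_mul, Finset.sum_sub_distrib, h1, h2, sub_zero]
  have hcoeff : ∀ i ℓ r, ∑ j, hcoef i j ℓ * a j r = 0 := by
    intro i ℓ r
    refine (Fintype.linearIndependent_iff.mp hind)
      (fun p => ∑ j, hcoef i j p.1 * a j p.2) ?_ (ℓ, r)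
    rw [← hsum i]
    simp only [Finset.sum_smul]
    rw [Finset.sum_comm]
    refine Finset.sum_congr rfl fun j _ => ?_
    rw [← ha j, hH i j, mul_comm, Finset.sum_mul_sum, Fintype.sum_prod_type]
    refine Finset.sum_congr rfl fun l _ => Finset.sum_congr rfl fun r _ => ?_
    rw [smul_mul_smul_comm]
  have hzero : ∀ r, (fun j => a j r) = 0 := by
    intro r
    apply hinj
    funext p
    obtain ⟨l, i⟩ := p
    simp only [Matrix.mulVec, dotProduct, hHext, Pi.zero_apply]
    exact hcoeff i l r
  funext j
  rw [← sub_eq_zero, ← ha j]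
  refine Finset.sum_eq_zero fun r _ => ?_
  have h : a j r = 0 := congrFun (hzero r) j
  rw [h, zero_smul]
end
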